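/- Let 𝒫 be a nonempty admissible and linearly repetitive set of abstract patterns in ℝ^d, and let F : 𝒫_B → ℝ be additive, i.e. both F and −F are subadditive. Then lim_{ω(P)→∞, P∈𝒫_B} F(P)/|P| exists and equals lim_{r→∞} F⁺(r): there is L ∈ ℝ such that for every ε > 0 there is W > 0 with |F(P)/|P| − L| < ε for every P ∈ 𝒫_B with ω(P) ≥ W, and F⁺(r) → L as r → ∞. -/

import Mathlib

open Metric Set Filter MeasureTheory Topology

noncomputable section

/-- Points of `ℝ^d`. -/
abbrev Pt (d : ℕ) := EuclideanSpace ℝ (Fin d)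

variable (d : ℕ)

/-- A tile: a subset of `ℝ^d` homeomorphic to the closed unit ball. -/
def IsTile (m : Set (Pt d)) : Prop :=
  Nonempty (m ≃ₜ (Metric.closedBall (0 : Pt d) 1))

/-- A pattern: a finite nonempty collection of tiles whose interiors are pairwise disjoint. -/
def IsPattern (M : Set (Set (Pt d))) : Prop :=
  M.Finite ∧ M.Nonempty ∧ (∀ m ∈ M, IsTile d m) ∧
    M.Pairwise fun m m' => interior m ∩ interior m' = ∅

/-- A tiling of `ℝ^d`: a collection of tiles with pairwise disjoint interiors covering `ℝ^d`. -/
def IsTiling (T : Set (Set (Pt d))) : Prop :=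
  (∀ m ∈ T, IsTile d m) ∧
    (T.Pairwise fun m m' => interior m ∩ interior m' = ∅) ∧ ⋃₀ T = Set.univ

/-- Translation of a pattern by `t`. -/
def patTrans (t : Pt d) (M : Set (Set (Pt d))) : Set (Set (Pt d)) :=
  (fun m => (fun x => x + t) '' m) '' M

/-- Support (underlying set) of a pattern. -/
def supp (M : Set (Set (Pt d))) : Set (Pt d) := ⋃₀ M

/-- Inner radius: the largest `r` such that some closed ball of radius `r` fits inside `s(M)`. -/
def rIn (M : Set (Set (Pt d))) : ℝ :=
  sSup {r : ℝ | ∃ x : Pt d, Metric.closedBall x r ⊆ supp d M}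

/-- Outer radius: the smallest `r` such that some closed ball of radius `r` contains `s(M)`. -/
def rOut (M : Set (Set (Pt d))) : ℝ :=
  sInf {r : ℝ | ∃ x : Pt d, supp d M ⊆ Metric.closedBall x r}

/-- The pattern class of `P` is a subpattern of (the class of) `Q`:
some translate of `P` is contained in `Q`. -/
def SubpatternClass (P Q : Set (Set (Pt d))) : Prop :=
  ∃ t : Pt d, patTrans d t P ⊆ Q

/-- A set of abstract patterns is modelled as a translation-closed set `Ps` of concrete
patterns (the union of the pattern classes).  `Admissible` encodes conditions
(i)–(iii) of Definition 2.1. -/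
structure Admissible (Ps : Set (Set (Set (Pt d)))) : Prop where
  pattern : ∀ P ∈ Ps, IsPattern d P
  transClosed : ∀ (t : Pt d), ∀ P ∈ Ps, patTrans d t P ∈ Ps
  subClosed : ∀ P ∈ Ps, ∀ Q : Set (Set (Pt d)), IsPattern d Q → Q ⊆ P → Q ∈ Ps
  tileBounds : ∃ rmin rmax : ℝ, 0 < rmin ∧ rmin ≤ rmax ∧
    ∀ m : Set (Pt d), ({m} : Set (Set (Pt d))) ∈ Ps →
      rmin ≤ rIn d {m} ∧ rIn d {m} ≤ rOut d {m} ∧ rOut d {m} ≤ rmax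
  extend : ∀ P ∈ Ps, (0 : Pt d) ∈ supp d P → ∀ r : ℝ, 0 < r →
    ∃ Q ∈ Ps, P ⊆ Q ∧ Metric.closedBall (0 : Pt d) r ⊆ supp d Q

/-- Linear repetitivity of a (translation-closed) set of patterns. -/
def LinearlyRepetitive (Ps : Set (Set (Set (Pt d)))) : Prop :=
  ∃ c : ℝ, 0 < c ∧ ∀ P ∈ Ps, 1 ≤ rOut d P →
    ∀ Q ∈ Ps, c * rOut d P ≤ rIn d Q → SubpatternClass d P Q

/-- The box determined by corner functions `a b : Fin d → ℝ`. -/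
def boxSet (a b : Fin d → ℝ) : Set (Pt d) := {x | ∀ j, x j ∈ Set.Icc (a j) (b j)}

/-- `B` is a box. -/
def IsBox (B : Set (Pt d)) : Prop :=
  ∃ a b : Fin d → ℝ, (∀ j, a j < b j) ∧ B = boxSet d a b

/-- `B` is an `r`-box: all side lengths lie in `[r, 2r]`. -/
def IsRBox (r : ℝ) (B : Set (Pt d)) : Prop :=
  ∃ a b : Fin d → ℝ, (∀ j, a j < b j) ∧ B = boxSet d a b ∧
    ∀ j, r ≤ b j - a j ∧ b j - a j ≤ 2 * r

/-- Width of a box: the minimum of its side lengths. -/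
def widthOf (B : Set (Pt d)) : ℝ :=
  ⨅ j : Fin d, (sSup ((fun x : Pt d => x j) '' B) - sInf ((fun x : Pt d => x j) '' B))

/-- Volume of a subset of `ℝ^d`. -/
def volOf (B : Set (Pt d)) : ℝ := (volume B).toReal

/-- Restriction `M ∩ B` of a pattern or tiling `M` to `B`. -/
def patRestrict (M : Set (Set (Pt d))) (B : Set (Pt d)) : Set (Set (Pt d)) :=
  {s | ∃ m ∈ M, (m ∩ interior B).Nonempty ∧ s = m ∩ B}

/-- The set `Ps_B` of box-patterns derived from `Ps` (concrete representatives). -/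
def BoxPatterns (Ps : Set (Set (Set (Pt d)))) : Set (Set (Set (Pt d))) :=
  {Q | ∃ P ∈ Ps, ∃ B : Set (Pt d), IsBox d B ∧ B ⊆ supp d P ∧ Q = patRestrict d P B}

/-- The set `Ps(r)` of `r`-patterns derived from `Ps`. -/
def RPatterns (Ps : Set (Set (Set (Pt d)))) (r : ℝ) : Set (Set (Set (Pt d))) :=
  {Q | ∃ P ∈ Ps, ∃ B : Set (Pt d), IsRBox d r B ∧ B ⊆ supp d P ∧ Q = patRestrict d P B}

/-- Width of a box-pattern. -/
def patWidth (M : Set (Set (Pt d))) : ℝ := widthOf d (supp d M)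

/-- Volume of a box-pattern. -/
def patVol (M : Set (Set (Pt d))) : ℝ := volOf d (supp d M)

/-- A subadditive function on `Ps_B`, with constants `dF, rF` and error function `cF`.
`F` is defined on concrete patterns and is translation-invariant (i.e. well defined on
pattern classes). -/
structure SubadditiveOn (Ps : Set (Set (Set (Pt d)))) (F : Set (Set (Pt d)) → ℝ)
    (dF rF : ℝ) (cF : ℝ → ℝ) : Prop where
  invariant : ∀ (t : Pt d), ∀ M ∈ BoxPatterns d Ps, F (patTrans d t M) = F M
  dF_nonneg : 0 ≤ dF
  rF_nonneg : 0 ≤ rF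
  cF_anti : ∀ r s : ℝ, rF ≤ r → r ≤ s → cF s ≤ cF r
  cF_lim : Tendsto cF atTop (nhds 0)
  subadd : ∀ M ∈ BoxPatterns d Ps, ∀ (n : ℕ) (Bj : Fin n → Set (Pt d)),
    (∀ j, IsBox d (Bj j)) →
    (∀ i j, i ≠ j → interior (Bj i) ∩ interior (Bj j) = ∅) →
    (⋃ j, Bj j) = supp d M →
    (∀ j, rF ≤ widthOf d (Bj j)) →
    F M ≤ (∑ j, F (patRestrict d M (Bj j))) +
      ∑ j, cF (widthOf d (Bj j)) * volOf d (Bj j)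
  bound : ∀ M ∈ BoxPatterns d Ps, |F M| ≤ dF * patVol d M

/-- The upper mean `F⁺(r)`. -/
def Fplus (Ps : Set (Set (Set (Pt d)))) (F : Set (Set (Pt d)) → ℝ) (r : ℝ) : ℝ :=
  sSup ((fun P => F P / patVol d P) '' RPatterns d Ps r)

/-- The lower mean `F⁻(r)`. -/
def Fminus (Ps : Set (Set (Set (Pt d)))) (F : Set (Set (Pt d)) → ℝ) (r : ℝ) : ℝ :=
  sInf ((fun P => F P / patVol d P) '' RPatterns d Ps r)

/-!
Let `u` be the upper limit of `F(P) / |P|` as `ω(P) → ∞`. Subadditivity transfers an upper bound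
for `F(N) / |N|` on all `r`-boxes `N`, up to the error `c_F(r)`, to all boxes of width at least `r`.
Suppose that the pattern seen through a large cube has mean at most `u - δ`. By linear repetitivity
a copy of it occurs in every box whose sides are at least `K` times longer. Cutting such a box of
side at most `2 * K * r` around the copy lowers its mean by `δ / (2 * K) ^ d`, a fixed amount, and
this would push the upper limit below `u`. Hence all large cubes have mean at least `u - δ`.
Applied to `F` and `-F` on one common cube, this gives `u(F) + u(-F) ≤ 0`, that is, the upper
limit of `F(P) / |P|` is at most its lower limit.
-/

section Boxes

variable {d} {a b : Fin d → ℝ} {r : ℝ}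

lemma boxSet_eq_preimage_pi :
    boxSet d a b =
      PiLp.homeomorph 2 (fun _ : Fin d => ℝ) ⁻¹' univ.pi fun j => Icc (a j) (b j) := by
  ext x
  simp only [mem_preimage, mem_univ_pi]
  rfl

lemma isCompact_boxSet : IsCompact (boxSet d a b) := by
  rw [boxSet_eq_preimage_pi, Homeomorph.isCompact_preimage]
  exact isCompact_univ_pi fun _ => isCompact_Icc

lemma interior_boxSet : interior (boxSet d a b) = {x | ∀ j, x j ∈ Ioo (a j) (b j)} := by
  rw [boxSet_eq_preimage_pi, ← Homeomorph.preimage_interior, interior_pi_set finite_univ]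
  ext x
  simp only [interior_Icc, mem_preimage, mem_univ_pi]
  rfl

lemma boxSet_subset_closure_interior (hab : ∀ j, a j < b j) :
    boxSet d a b ⊆ closure (interior (boxSet d a b)) := by
  rw [boxSet_eq_preimage_pi, ← Homeomorph.preimage_interior, interior_pi_set finite_univ,
    ← Homeomorph.preimage_closure, closure_pi_set]
  simp only [interior_Icc, closure_Ioo (hab _).ne, Subset.rfl]

lemma volOf_boxSet (hab : ∀ j, a j ≤ b j) : volOf d (boxSet d a b) = ∏ j, (b j - a j) := by
  have hpre : boxSet d a b = WithLp.ofLp ⁻¹' Icc a b := by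
    ext x
    simp [boxSet, Pi.le_def, forall_and]
  rw [volOf, hpre, (PiLp.volume_preserving_ofLp (Fin d)).measure_preimage
    measurableSet_Icc.nullMeasurableSet, Real.volume_Icc_pi_toReal hab]

lemma image_apply_boxSet (hab : ∀ j, a j ≤ b j) (j : Fin d) :
    (fun x : Pt d => x j) '' boxSet d a b = Icc (a j) (b j) := by
  refine Subset.antisymm (image_subset_iff.mpr fun x hx => hx j) fun y hy =>
    ⟨WithLp.toLp 2 (Function.update a j y), fun i => ?_, by simp⟩
  obtain rfl | hij := eq_or_ne i j
  · simpa using hy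
  · simp [hij, hab i]

lemma le_widthOf_boxSet_iff [Nonempty (Fin d)] (hab : ∀ j, a j ≤ b j) :
    r ≤ widthOf d (boxSet d a b) ↔ ∀ j, r ≤ b j - a j := by
  rw [widthOf, le_ciInf_iff (finite_range _).bddBelow]
  simp only [image_apply_boxSet hab, csSup_Icc (hab _), csInf_Icc (hab _)]

lemma image_add_right_boxSet (t : Pt d) :
    (fun x => x + t) '' boxSet d a b = boxSet d (fun j => a j + t j) (fun j => b j + t j) := by
  ext x
  simp [boxSet, image_add_right, ← sub_eq_add_neg, le_sub_iff_add_le]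

lemma abs_apply_sub_apply_le_dist (x y : Pt d) (j : Fin d) : |x j - y j| ≤ dist x y := by
  rw [dist_eq_norm]
  exact PiLp.norm_apply_le (x - y) j

lemma closedBall_subset_boxSet {c : Pt d} (h : ∀ j, a j + r ≤ c j ∧ c j + r ≤ b j) :
    closedBall c r ⊆ boxSet d a b := fun x hx j => by
  have := abs_le.mp ((abs_apply_sub_apply_le_dist x c j).trans hx)
  constructor <;> linarith [h j]

lemma IsBox.nonempty {B : Set (Pt d)} : IsBox d B → B.Nonempty := by
  rintro ⟨a, b, hab, rfl⟩
  exact ⟨WithLp.toLp 2 a, fun j => ⟨le_rfl, (hab j).le⟩⟩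

lemma IsBox.isBounded {B : Set (Pt d)} : IsBox d B → Bornology.IsBounded B := by
  rintro ⟨a, b, -, rfl⟩
  exact isCompact_boxSet.isBounded

lemma IsBox.subset_closure_interior {B : Set (Pt d)} : IsBox d B → B ⊆ closure (interior B) := by
  rintro ⟨a, b, hab, rfl⟩
  exact boxSet_subset_closure_interior hab

lemma IsBox.volOf_pos {B : Set (Pt d)} : IsBox d B → 0 < volOf d B := by
  rintro ⟨a, b, hab, rfl⟩
  rw [volOf_boxSet fun j => (hab j).le]
  exact Finset.prod_pos fun j _ => sub_pos.mpr (hab j)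

lemma IsRBox.isBox {B : Set (Pt d)} : IsRBox d r B → IsBox d B := by
  rintro ⟨a, b, hab, rfl, -⟩
  exact ⟨a, b, hab, rfl⟩

lemma IsRBox.le_widthOf [Nonempty (Fin d)] {B : Set (Pt d)} : IsRBox d r B → r ≤ widthOf d B := by
  rintro ⟨a, b, hab, rfl, hr⟩
  exact (le_widthOf_boxSet_iff fun j => (hab j).le).mpr fun j => (hr j).1

lemma IsRBox.volOf_le {B : Set (Pt d)} : IsRBox d r B → volOf d B ≤ (2 * r) ^ d := by
  rintro ⟨a, b, hab, rfl, hr⟩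
  rw [volOf_boxSet fun j => (hab j).le]
  calc ∏ j, (b j - a j) ≤ ∏ _j : Fin d, 2 * r :=
        Finset.prod_le_prod (fun j _ => sub_nonneg.mpr (hab j).le) fun j _ => (hr j).2
    _ = (2 * r) ^ d := by simp

variable (d) in
/-- The cube `[0, r]^d`. -/
def cube (r : ℝ) : Set (Pt d) := boxSet d (fun _ => 0) fun _ => r

lemma isRBox_cube (hr : 0 < r) : IsRBox d r (cube d r) :=
  ⟨fun _ => 0, fun _ => r, fun _ => hr, rfl, fun _ => ⟨by simp, by simp; linarith⟩⟩

lemma isBox_cube (hr : 0 < r) : IsBox d (cube d r) := (isRBox_cube hr).isBox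

lemma zero_mem_cube (hr : 0 ≤ r) : (0 : Pt d) ∈ cube d r := fun _ => ⟨le_rfl, hr⟩

lemma const_mem_cube (hr : 0 ≤ r) : (WithLp.toLp 2 fun _ => r : Pt d) ∈ cube d r :=
  fun _ => ⟨hr, le_rfl⟩

lemma norm_le_of_mem_cube {x : Pt d} (hx : x ∈ cube d r) : ‖x‖ ≤ d * r := by
  calc ‖x‖ ≤ ∑ j, ‖x j‖ := by
        rw [EuclideanSpace.norm_eq, Real.sqrt_le_left (by positivity)]
        exact Finset.sum_sq_le_sq_sum_of_nonneg fun j _ => norm_nonneg _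
    _ ≤ ∑ _j : Fin d, r := Finset.sum_le_sum fun j _ => by
        rw [Real.norm_of_nonneg (hx j).1]
        exact (hx j).2
    _ = d * r := by simp

end Boxes

section BoxGrid

lemma sum_succ_sub_castSucc {G : Type*} [AddCommGroup G] {n : ℕ} (p : Fin (n + 1) → G) :
    ∑ i : Fin n, (p i.succ - p i.castSucc) = p (Fin.last n) - p 0 := by
  rw [Finset.sum_sub_distrib, sub_eq_sub_iff_add_eq_add, add_comm, ← Fin.sum_univ_succ,
    Fin.sum_univ_castSucc, add_comm]

lemma exists_mem_Icc_castSucc_succ {α : Type*} [LinearOrder α] {n : ℕ} (hn : 0 < n)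
    (p : Fin (n + 1) → α) {x : α} (hx : x ∈ Icc (p 0) (p (Fin.last n))) :
    ∃ i : Fin n, x ∈ Icc (p i.castSucc) (p i.succ) := by
  by_contra! h
  have hlt : ∀ i : Fin n, p i.castSucc ≤ x → p i.succ < x :=
    fun i hi => not_le.mp fun hi' => h i ⟨hi, hi'⟩
  have hle : ∀ i, p i ≤ x := Fin.induction hx.1 fun i hi => (hlt i hi).le
  obtain ⟨n, rfl⟩ := Nat.exists_eq_succ_of_ne_zero hn.ne'
  exact (hlt (Fin.last n) (hle _)).not_ge hx.2

lemma exists_nat_div_mem_Icc {R l : ℝ} (hR : 0 < R) (hl : R ≤ l) :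
    ∃ n : ℕ, 0 < n ∧ l / n ∈ Icc R (2 * R) := by
  have hn : 0 < ⌊l / R⌋₊ := Nat.floor_pos.mpr ((one_le_div hR).mpr hl)
  refine ⟨⌊l / R⌋₊, hn, ?_, ?_⟩
  · rw [le_div_comm₀ hR (Nat.cast_pos.mpr hn)]
    exact Nat.floor_le (div_nonneg (hR.le.trans hl) hR.le)
  · have hlt : l / R < ⌊l / R⌋₊ + 1 := Nat.lt_floor_add_one _
    have hone : (1 : ℝ) ≤ ⌊l / R⌋₊ := Nat.one_le_cast.mpr hn
    rw [div_lt_iff₀ hR] at hlt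
    rw [div_le_iff₀ (Nat.cast_pos.mpr hn)]
    nlinarith

/-- A partition of a box into finitely many boxes by hyperplanes orthogonal to the axes: in
direction `j` the hyperplanes `x j = pt j i` bound `num j` slabs. -/
structure BoxGrid (d : ℕ) where
  num : Fin d → ℕ
  num_pos : ∀ j, 0 < num j
  pt : ∀ j, Fin (num j + 1) → ℝ
  strictMono_pt : ∀ j, StrictMono (pt j)

namespace BoxGrid

variable {d} (g : BoxGrid d)

/-- Labels of the cells of a grid: the position of the cell in each direction. -/
abbrev Index := ∀ j, Fin (g.num j)

/-- The box partitioned by a grid. -/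
def box : Set (Pt d) := boxSet d (fun j => g.pt j 0) fun j => g.pt j (Fin.last _)

/-- The cell of a grid with a given label. -/
def cell (k : g.Index) : Set (Pt d) :=
  boxSet d (fun j => g.pt j (k j).castSucc) fun j => g.pt j (k j).succ

lemma pt_castSucc_lt_pt_succ (k : g.Index) (j : Fin d) :
    g.pt j (k j).castSucc < g.pt j (k j).succ :=
  g.strictMono_pt j Fin.castSucc_lt_succ

lemma pt_zero_le_pt_last (j : Fin d) : g.pt j 0 ≤ g.pt j (Fin.last _) :=
  (g.strictMono_pt j).monotone (Fin.zero_le _)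

lemma isBox_cell (k : g.Index) : IsBox d (g.cell k) := ⟨_, _, g.pt_castSucc_lt_pt_succ k, rfl⟩

lemma cell_subset_box (k : g.Index) : g.cell k ⊆ g.box := fun _ hx j =>
  ⟨((g.strictMono_pt j).monotone (Fin.zero_le _)).trans (hx j).1,
    (hx j).2.trans ((g.strictMono_pt j).monotone (Fin.le_last _))⟩

lemma iUnion_cell : ⋃ k, g.cell k = g.box := by
  refine Subset.antisymm (iUnion_subset g.cell_subset_box) fun x hx => mem_iUnion.mpr ?_
  choose k hk using fun j => exists_mem_Icc_castSucc_succ (g.num_pos j) (g.pt j) (hx j)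
  exact ⟨k, hk⟩

lemma interior_cell_inter_interior_cell {k k' : g.Index} (h : k ≠ k') :
    interior (g.cell k) ∩ interior (g.cell k') = ∅ := by
  obtain ⟨j, hj⟩ := Function.ne_iff.mp h
  wlog hlt : k j < k' j generalizing k k'
  · rw [inter_comm]
    exact this h.symm hj.symm (hj.lt_or_gt.resolve_left hlt)
  refine eq_empty_of_forall_notMem fun x hx => ?_
  rw [cell, cell, interior_boxSet, interior_boxSet] at hx
  have hle : g.pt j (k j).succ ≤ g.pt j (k' j).castSucc :=
    (g.strictMono_pt j).monotone (Fin.succ_le_castSucc_iff.mpr hlt)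
  exact ((hx.1 j).2.trans_le hle).not_gt (hx.2 j).1

lemma sum_volOf_cell : ∑ k, volOf d (g.cell k) = volOf d g.box := by
  calc ∑ k, volOf d (g.cell k)
      = ∑ k : g.Index, ∏ j, (g.pt j (k j).succ - g.pt j (k j).castSucc) :=
        Finset.sum_congr rfl fun k _ => volOf_boxSet fun j => (g.pt_castSucc_lt_pt_succ k j).le
    _ = ∏ j, ∑ i : Fin (g.num j), (g.pt j i.succ - g.pt j i.castSucc) := by
        rw [Finset.prod_univ_sum, Fintype.piFinset_univ]
    _ = volOf d g.box := by
        simp only [sum_succ_sub_castSucc, box, volOf_boxSet g.pt_zero_le_pt_last]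

end BoxGrid

variable {d} {a b : Fin d → ℝ} {r : ℝ}

lemma exists_boxGrid_isRBox_cell (hr : 0 < r) (hab : ∀ j, r ≤ b j - a j) :
    ∃ g : BoxGrid d, g.box = boxSet d a b ∧ ∀ k, IsRBox d r (g.cell k) := by
  choose n hn hstep using fun j => exists_nat_div_mem_Icc hr (hab j)
  let step j := (b j - a j) / n j
  let g : BoxGrid d :=
    { num := n
      num_pos := hn
      pt := fun j i => a j + i * step j
      strictMono_pt := fun j i i' hii' => by
        have : 0 < step j := hr.trans_le (hstep j).1
        beta_reduce
        gcongr
        exact hii' }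
  have hpt_last (j) : a j + n j * step j = b j := by
    have : (n j : ℝ) ≠ 0 := by exact_mod_cast (hn j).ne'
    simp only [step]
    field_simp
    ring
  refine ⟨g, by simp [g, BoxGrid.box, hpt_last], fun k =>
    ⟨_, _, g.pt_castSucc_lt_pt_succ k, rfl, fun j => ?_⟩⟩
  have hside : g.pt j (k j).succ - g.pt j (k j).castSucc = step j := by
    simp only [g, Fin.val_succ, Fin.val_castSucc]
    push_cast
    ring
  rw [hside]
  exact hstep j

lemma exists_boxGrid_cell_eq [Nonempty (Fin d)] {s t : Fin d → ℝ} (hr : 0 < r)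
    (has : ∀ j, a j + r ≤ s j) (hst : ∀ j, s j + r ≤ t j) (htb : ∀ j, t j + r ≤ b j) :
    ∃ (g : BoxGrid d) (k₀ : g.Index), g.box = boxSet d a b ∧ g.cell k₀ = boxSet d s t ∧
      ∀ k, r ≤ widthOf d (g.cell k) := by
  have hstep (j) (i : Fin 3) :
      ![a j, s j, t j, b j] i.castSucc + r ≤ ![a j, s j, t j, b j] i.succ := by
    fin_cases i
    exacts [has j, hst j, htb j]
  let g : BoxGrid d :=
    { num := fun _ => 3
      num_pos := fun _ => three_pos
      pt := fun j => ![a j, s j, t j, b j]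
      strictMono_pt := fun j =>
        Fin.strictMono_iff_lt_succ.mpr fun i => (lt_add_of_pos_right _ hr).trans_le (hstep j i) }
  refine ⟨g, fun _ => (1 : Fin 3), rfl, rfl, fun k => ?_⟩
  rw [BoxGrid.cell, le_widthOf_boxSet_iff fun j => (g.pt_castSucc_lt_pt_succ k j).le]
  exact fun j => le_sub_iff_add_le'.mpr (hstep j (k j))

end BoxGrid

section Patterns

variable {d} {M P Q : Set (Set (Pt d))} {B C : Set (Pt d)} {x y t : Pt d} {r : ℝ}

lemma IsTile.isCompact {m : Set (Pt d)} (hm : IsTile d m) : IsCompact m := by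
  obtain ⟨e⟩ := hm
  have := isCompact_iff_compactSpace.mp (isCompact_closedBall (0 : Pt d) 1)
  exact isCompact_iff_compactSpace.mpr e.symm.compactSpace

lemma IsTile.nonempty {m : Set (Pt d)} (hm : IsTile d m) : m.Nonempty := by
  obtain ⟨e⟩ := hm
  exact ⟨_, (e.symm ⟨0, mem_closedBall_self zero_le_one⟩).2⟩

lemma IsPattern.mono (hP : IsPattern d P) (hQ : Q.Nonempty) (hQP : Q ⊆ P) : IsPattern d Q :=
  ⟨hP.1.subset hQP, hQ, fun m hm => hP.2.2.1 m (hQP hm), hP.2.2.2.mono hQP⟩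

lemma IsPattern.isCompact_supp (hP : IsPattern d P) : IsCompact (supp d P) :=
  hP.1.isCompact_sUnion fun m hm => (hP.2.2.1 m hm).isCompact

lemma IsPattern.nonempty_supp (hP : IsPattern d P) : (supp d P).Nonempty := by
  obtain ⟨m, hm⟩ := hP.2.1
  exact (hP.2.2.1 m hm).nonempty.mono (subset_sUnion_of_mem hm)

lemma supp_singleton (m : Set (Pt d)) : supp d {m} = m := sUnion_singleton m

lemma bddAbove_rIn_set [Nonempty (Fin d)] (hM : Bornology.IsBounded (supp d M)) :
    BddAbove {s | ∃ x, closedBall x s ⊆ supp d M} := by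
  refine ⟨diam (supp d M) / 2, ?_⟩
  rintro s ⟨x, hx⟩
  obtain hs | hs := le_total s 0
  · exact hs.trans (by positivity)
  · linarith [diam_closedBall_eq x hs, diam_mono hx hM]

lemma le_rIn_of_closedBall_subset [Nonempty (Fin d)] (hM : Bornology.IsBounded (supp d M))
    (h : closedBall x r ⊆ supp d M) : r ≤ rIn d M :=
  le_csSup (bddAbove_rIn_set hM) ⟨x, h⟩

-- A junk value: in dimension `0` all radii are admitted, and `sSup` of an unbounded set is `0`.
lemma rIn_eq_zero_of_isEmpty [IsEmpty (Fin d)] (hM : (supp d M).Nonempty) : rIn d M = 0 := by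
  have huniv : {r | ∃ x : Pt d, closedBall x r ⊆ supp d M} = univ :=
    eq_univ_of_forall fun r => ⟨0, (Subsingleton.eq_univ_of_nonempty hM).symm ▸ subset_univ _⟩
  rw [rIn, huniv, Real.sSup_univ]

lemma exists_closedBall_subset_of_lt_rIn (h : r < rIn d M) : ∃ x, closedBall x r ⊆ supp d M := by
  have hne : {s | ∃ x : Pt d, closedBall x s ⊆ supp d M}.Nonempty := ⟨-1, 0, by simp⟩
  obtain ⟨s, ⟨x, hx⟩, hrs⟩ := exists_lt_of_lt_csSup hne h
  exact ⟨x, (closedBall_subset_closedBall hrs.le).trans hx⟩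

lemma rOut_le_of_subset_closedBall (hM : (supp d M).Nonempty) (h : supp d M ⊆ closedBall x r) :
    rOut d M ≤ r := by
  refine csInf_le ⟨0, ?_⟩ ⟨x, h⟩
  rintro s ⟨y, hy⟩
  exact nonempty_closedBall.mp (hM.mono hy)

lemma dist_le_two_mul_rOut (hM : Bornology.IsBounded (supp d M)) (hx : x ∈ supp d M)
    (hy : y ∈ supp d M) : dist x y ≤ 2 * rOut d M := by
  suffices dist x y / 2 ≤ rOut d M by linarith
  obtain ⟨R, hR⟩ := hM.subset_closedBall 0
  refine le_csInf ⟨R, 0, hR⟩ ?_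
  rintro s ⟨z, hz⟩
  linarith [dist_triangle_right x y z, mem_closedBall.mp (hz hx), mem_closedBall.mp (hz hy)]

lemma patTrans_neg_patTrans (t : Pt d) (P : Set (Set (Pt d))) :
    patTrans d (-t) (patTrans d t P) = P := by
  simp only [patTrans, image_image, add_neg_cancel_right, image_id']

lemma patTrans_patTrans_neg (t : Pt d) (P : Set (Set (Pt d))) :
    patTrans d t (patTrans d (-t) P) = P := by
  simpa using patTrans_neg_patTrans (-t) P

lemma patRestrict_patTrans (t : Pt d) (P : Set (Set (Pt d))) (B : Set (Pt d)) :
    patRestrict d (patTrans d t P) ((fun x => x + t) '' B) = patTrans d t (patRestrict d P B) := by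
  have hinterior : interior ((fun x => x + t) '' B) = (fun x => x + t) '' interior B :=
    ((Homeomorph.addRight t).image_interior B).symm
  have hinter (m C : Set (Pt d)) :
      (fun x => x + t) '' m ∩ (fun x => x + t) '' C = (fun x => x + t) '' (m ∩ C) :=
    (image_inter (add_left_injective t)).symm
  ext s
  constructor
  · rintro ⟨_, ⟨m, hm, rfl⟩, hmB, rfl⟩
    rw [hinterior, hinter, image_nonempty] at hmB
    exact ⟨m ∩ B, ⟨m, hm, hmB, rfl⟩, (hinter m B).symm⟩
  · rintro ⟨_, ⟨m, hm, hmB, rfl⟩, rfl⟩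
    refine ⟨_, ⟨m, hm, rfl⟩, ?_, (hinter m B).symm⟩
    rw [hinterior, hinter, image_nonempty]
    exact hmB

lemma patRestrict_patRestrict (P : Set (Set (Pt d))) (hCB : C ⊆ B) :
    patRestrict d (patRestrict d P B) C = patRestrict d P C := by
  have hinter (m : Set (Pt d)) : m ∩ B ∩ C = m ∩ C := by
    rw [inter_assoc, inter_eq_right.mpr hCB]
  have hinterior (m : Set (Pt d)) : m ∩ B ∩ interior C = m ∩ interior C := by
    rw [inter_assoc, inter_eq_right.mpr (interior_subset.trans hCB)]
  ext s
  constructor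
  · rintro ⟨_, ⟨m, hm, -, rfl⟩, hmC, rfl⟩
    exact ⟨m, hm, hinterior m ▸ hmC, hinter m⟩
  · rintro ⟨m, hm, hmC, rfl⟩
    exact ⟨m ∩ B, ⟨m, hm, hmC.mono (inter_subset_inter_right m (interior_mono hCB)), rfl⟩,
      (hinterior m).symm ▸ hmC, (hinter m).symm⟩

/-- The tiles of `P` that meet the interior of `B`, i.e. those that contribute to `P ∩ B`. -/
def tilesMeeting (P : Set (Set (Pt d))) (B : Set (Pt d)) : Set (Set (Pt d)) :=
  {m ∈ P | (m ∩ interior B).Nonempty}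

lemma tilesMeeting_subset : tilesMeeting P B ⊆ P := sep_subset _ _

-- The tiles meeting `interior B` form a closed set covering `interior B`, hence its closure.
lemma subset_supp_tilesMeeting (hP : IsPattern d P) (hB : B ⊆ closure (interior B))
    (hBP : B ⊆ supp d P) : B ⊆ supp d (tilesMeeting P B) := by
  have hclosed : IsClosed (supp d (tilesMeeting P B)) :=
    ((hP.1.subset tilesMeeting_subset).isCompact_sUnion fun m hm =>
      (hP.2.2.1 m hm.1).isCompact).isClosed
  refine hB.trans (closure_minimal (fun x hx => ?_) hclosed)
  obtain ⟨m, hm, hxm⟩ := hBP (interior_subset hx)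
  exact ⟨m, ⟨hm, x, hxm, hx⟩, hxm⟩

lemma IsPattern.supp_patRestrict (hP : IsPattern d P) (hB : B ⊆ closure (interior B))
    (hBP : B ⊆ supp d P) : supp d (patRestrict d P B) = B := by
  apply Subset.antisymm
  · rintro x ⟨_, ⟨m, -, -, rfl⟩, hx⟩
    exact hx.2
  · intro x hx
    obtain ⟨m, hm, hxm⟩ := subset_supp_tilesMeeting hP hB hBP hx
    exact ⟨m ∩ B, ⟨m, hm.1, hm.2, rfl⟩, hxm, hx⟩

end Patterns

section Admissible

lemma exists_ncard_le_of_ball_subset {X : Type*} [PseudoMetricSpace X] {K : Set X}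
    (hK : TotallyBounded K) {ρ : ℝ} (hρ : 0 < ρ) :
    ∃ n, ∀ M : Set (Set X), M.Pairwise (fun m m' => interior m ∩ interior m' = ∅) →
      (∀ m ∈ M, ∃ x ∈ K, ball x ρ ⊆ m) → M.ncard ≤ n := by
  obtain ⟨net, hfin, hnet⟩ := totallyBounded_iff.mp hK ρ hρ
  refine ⟨net.ncard, fun M hM hball => ?_⟩
  have hpick : ∀ m ∈ M, ∃ y ∈ net, y ∈ interior m := fun m hm => by
    obtain ⟨x, hxK, hxm⟩ := hball m hm
    obtain ⟨y, hy, hxy⟩ := mem_iUnion₂.mp (hnet hxK)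
    exact ⟨y, hy, interior_maximal hxm isOpen_ball (mem_ball_comm.mp hxy)⟩
  obtain rfl | ⟨m₀, hm₀⟩ := M.eq_empty_or_nonempty
  · simp
  have : Nonempty X := ⟨(hball m₀ hm₀).choose⟩
  choose! pick hmem hinterior using hpick
  refine ncard_le_ncard_of_injOn pick hmem (fun m hm m' hm' heq => ?_) hfin
  by_contra hmm'
  exact (hM hm hm' hmm').subset ⟨hinterior m hm, heq ▸ hinterior m' hm'⟩

variable {d} {Ps : Set (Set (Set (Pt d)))} {P Q M : Set (Set (Pt d))} {B : Set (Pt d)} {r : ℝ}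

namespace Admissible

lemma singleton_mem (hadm : Admissible d Ps) (hP : P ∈ Ps) {m : Set (Pt d)} (hm : m ∈ P) :
    {m} ∈ Ps :=
  hadm.subClosed P hP {m}
    ((hadm.pattern P hP).mono (singleton_nonempty m) (singleton_subset_iff.mpr hm))
    (singleton_subset_iff.mpr hm)

lemma exists_ball_subset_tile (hadm : Admissible d Ps) :
    ∃ ρ > 0, ∀ P ∈ Ps, ∀ m ∈ P, ∃ x, ball x ρ ⊆ m := by
  obtain ⟨rmin, rmax, hrmin, -, hbounds⟩ := hadm.tileBounds
  refine ⟨rmin / 2, half_pos hrmin, fun P hP m hm => ?_⟩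
  obtain ⟨x, hx⟩ := exists_closedBall_subset_of_lt_rIn
    ((half_lt_self hrmin).trans_le (hbounds m (hadm.singleton_mem hP hm)).1)
  exact ⟨x, ball_subset_closedBall.trans (supp_singleton m ▸ hx)⟩

lemma exists_dist_le_of_mem_tile (hadm : Admissible d Ps) :
    ∃ D, ∀ P ∈ Ps, ∀ m ∈ P, ∀ x ∈ m, ∀ y ∈ m, dist x y ≤ D := by
  obtain ⟨rmin, rmax, -, -, hbounds⟩ := hadm.tileBounds
  refine ⟨2 * rmax, fun P hP m hm x hx y hy => ?_⟩
  have hm' := hadm.singleton_mem hP hm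
  have hbdd := (hadm.pattern _ hm').isCompact_supp.isBounded
  rw [← supp_singleton m] at hx hy
  linarith [dist_le_two_mul_rOut hbdd hx hy, (hbounds m hm').2.2]

lemma nonempty_fin (hadm : Admissible d Ps) (hne : Ps.Nonempty) : Nonempty (Fin d) := by
  by_contra hd
  rw [not_nonempty_iff] at hd
  obtain ⟨rmin, _, hrmin, -, hbounds⟩ := hadm.tileBounds
  obtain ⟨P, hP⟩ := hne
  obtain ⟨m, hm⟩ := (hadm.pattern P hP).2.1
  have hm' := hadm.singleton_mem hP hm
  have := (hbounds m hm').1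
  rw [rIn_eq_zero_of_isEmpty (hadm.pattern _ hm').nonempty_supp] at this
  exact this.not_gt hrmin

lemma exists_subset_supp (hadm : Admissible d Ps) (hne : Ps.Nonempty) {K : Set (Pt d)}
    (hK : Bornology.IsBounded K) : ∃ P ∈ Ps, K ⊆ supp d P := by
  obtain ⟨P, hP⟩ := hne
  obtain ⟨x, m, hm, hxm⟩ := (hadm.pattern P hP).nonempty_supp
  have h0 : (0 : Pt d) ∈ supp d (patTrans d (-x) P) :=
    ⟨_, mem_image_of_mem _ hm, x, hxm, add_neg_cancel x⟩
  obtain ⟨r, hr, hKr⟩ := hK.subset_closedBall_lt 0 0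
  obtain ⟨Q, hQ, -, hrQ⟩ := hadm.extend _ (hadm.transClosed (-x) P hP) h0 r hr
  exact ⟨Q, hQ, hKr.trans hrQ⟩

lemma tilesMeeting_mem (hadm : Admissible d Ps) (hP : P ∈ Ps) (hB : B.Nonempty)
    (hB' : B ⊆ closure (interior B)) (hBP : B ⊆ supp d P) : tilesMeeting P B ∈ Ps := by
  refine hadm.subClosed P hP _ ((hadm.pattern P hP).mono ?_ tilesMeeting_subset)
    tilesMeeting_subset
  obtain ⟨x, hx⟩ := hB
  obtain ⟨m, hm, -⟩ := subset_supp_tilesMeeting (hadm.pattern P hP) hB' hBP hx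
  exact ⟨m, hm⟩

lemma supp_patRestrict (hadm : Admissible d Ps) (hP : P ∈ Ps) (hB : IsBox d B)
    (hBP : B ⊆ supp d P) : supp d (patRestrict d P B) = B :=
  (hadm.pattern P hP).supp_patRestrict hB.subset_closure_interior hBP

lemma isBox_supp (hadm : Admissible d Ps) (hM : M ∈ BoxPatterns d Ps) : IsBox d (supp d M) := by
  obtain ⟨P, hP, B, hB, hBP, rfl⟩ := hM
  rwa [hadm.supp_patRestrict hP hB hBP]

lemma patVol_pos (hadm : Admissible d Ps) (hM : M ∈ BoxPatterns d Ps) : 0 < patVol d M :=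
  (hadm.isBox_supp hM).volOf_pos

lemma exists_patRestrict_supp_eq (hadm : Admissible d Ps) (hM : M ∈ BoxPatterns d Ps) :
    ∃ P ∈ Ps, supp d M ⊆ supp d P ∧ patRestrict d P (supp d M) = M := by
  obtain ⟨P, hP, B, hB, hBP, rfl⟩ := hM
  rw [hadm.supp_patRestrict hP hB hBP]
  exact ⟨P, hP, hBP, rfl⟩

lemma patRestrict_mem_boxPatterns (hadm : Admissible d Ps) (hM : M ∈ BoxPatterns d Ps)
    (hB : IsBox d B) (hBM : B ⊆ supp d M) : patRestrict d M B ∈ BoxPatterns d Ps := by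
  obtain ⟨P, hP, hMP, heq⟩ := hadm.exists_patRestrict_supp_eq hM
  refine ⟨P, hP, B, hB, hBM.trans hMP, ?_⟩
  conv_lhs => rw [← heq]
  exact patRestrict_patRestrict P hBM

lemma supp_patRestrict_of_mem_boxPatterns (hadm : Admissible d Ps) (hM : M ∈ BoxPatterns d Ps)
    (hB : IsBox d B) (hBM : B ⊆ supp d M) : supp d (patRestrict d M B) = B := by
  obtain ⟨P, hP, hMP, heq⟩ := hadm.exists_patRestrict_supp_eq hM
  rw [← heq, patRestrict_patRestrict P hBM, hadm.supp_patRestrict hP hB (hBM.trans hMP)]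

lemma mem_rPatterns_iff (hadm : Admissible d Ps) :
    M ∈ RPatterns d Ps r ↔ M ∈ BoxPatterns d Ps ∧ IsRBox d r (supp d M) := by
  constructor
  · rintro ⟨P, hP, B, hB, hBP, rfl⟩
    exact ⟨⟨P, hP, B, hB.isBox, hBP, rfl⟩, by rwa [hadm.supp_patRestrict hP hB.isBox hBP]⟩
  · rintro ⟨hM, hr⟩
    obtain ⟨P, hP, hMP, heq⟩ := hadm.exists_patRestrict_supp_eq hM
    exact ⟨P, hP, supp d M, hr, hMP, heq.symm⟩

end Admissible

/-- `P` covers `B` by tiles meeting the interior of `B`, and no larger pattern of `Ps` has further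
tiles meeting the interior of `B`. Every occurrence of `P` then determines the pattern seen through
`B`. Covering `B` alone is not known to suffice: without invariance of domain, a set homeomorphic
to a ball need not be the closure of its interior, so an additional tile could meet the interior of
`B` without overlapping the interiors of the tiles of `P`. -/
structure Saturates (Ps : Set (Set (Set (Pt d)))) (P : Set (Set (Pt d))) (B : Set (Pt d)) :
    Prop where
  mem : P ∈ Ps
  subset_supp : B ⊆ supp d P
  meets : ∀ m ∈ P, (m ∩ interior B).Nonempty
  mem_of_superset : ∀ Q ∈ Ps, P ⊆ Q → ∀ m ∈ Q, (m ∩ interior B).Nonempty → m ∈ P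

lemma Saturates.patRestrict_eq_of_subset (hP : Saturates Ps P B) (hQ : Q ∈ Ps) (hPQ : P ⊆ Q) :
    patRestrict d Q B = patRestrict d P B := by
  ext s
  constructor
  · rintro ⟨m, hm, hmB, rfl⟩
    exact ⟨m, hP.mem_of_superset Q hQ hPQ m hm hmB, hmB, rfl⟩
  · rintro ⟨m, hm, hmB, rfl⟩
    exact ⟨m, hPQ hm, hmB, rfl⟩

lemma Saturates.patRestrict_image_add (hadm : Admissible d Ps) (hP : Saturates Ps P B)
    (hQ : Q ∈ Ps) {t : Pt d} (hPQ : patTrans d t P ⊆ Q) :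
    patRestrict d Q ((fun x => x + t) '' B) = patTrans d t (patRestrict d P B) := by
  have hPQ' : P ⊆ patTrans d (-t) Q := by
    rw [← patTrans_neg_patTrans t P]
    exact image_mono hPQ
  rw [← hP.patRestrict_eq_of_subset (hadm.transClosed (-t) Q hQ) hPQ', ← patRestrict_patTrans,
    patTrans_patTrans_neg]

lemma Admissible.exists_ncard_le (hadm : Admissible d Ps) (hB : Bornology.IsBounded B) :
    ∃ n, ∀ P ∈ Ps, (∀ m ∈ P, (m ∩ B).Nonempty) → P.ncard ≤ n := by
  obtain ⟨ρ, hρ, hball⟩ := hadm.exists_ball_subset_tile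
  obtain ⟨D, hD⟩ := hadm.exists_dist_le_of_mem_tile
  have hK : TotallyBounded (cthickening D B) :=
    hB.cthickening.isCompact_closure.totallyBounded.subset subset_closure
  obtain ⟨n, hn⟩ := exists_ncard_le_of_ball_subset hK hρ
  refine ⟨n, fun P hP hPB => hn P (hadm.pattern P hP).2.2.2 fun m hm => ?_⟩
  obtain ⟨x, hx⟩ := hball P hP m hm
  obtain ⟨y, hym, hyB⟩ := hPB m hm
  exact ⟨x, mem_cthickening_of_dist_le x y D B hyB
    (hD P hP m hm x (hx (mem_ball_self hρ)) y hym), hx⟩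

-- A pattern covering `B` with the largest possible number of tiles meeting `interior B`.
lemma Admissible.exists_saturates (hne : Ps.Nonempty) (hadm : Admissible d Ps) (hB : IsBox d B) :
    ∃ P, Saturates Ps P B := by
  let cards := {n | ∃ P ∈ Ps, B ⊆ supp d P ∧ (∀ m ∈ P, (m ∩ interior B).Nonempty) ∧ P.ncard = n}
  have hmeeting (Q : Set (Set (Pt d))) (hQ : Q ∈ Ps) (hBQ : B ⊆ supp d Q) :
      tilesMeeting Q B ∈ Ps ∧ (tilesMeeting Q B).ncard ∈ cards :=
    have hmem := hadm.tilesMeeting_mem hQ hB.nonempty hB.subset_closure_interior hBQ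
    ⟨hmem, _, hmem, subset_supp_tilesMeeting (hadm.pattern Q hQ) hB.subset_closure_interior hBQ,
      fun m hm => hm.2, rfl⟩
  have hcards : cards.Nonempty := by
    obtain ⟨Q, hQ, hBQ⟩ := hadm.exists_subset_supp hne hB.isBounded
    exact ⟨_, (hmeeting Q hQ hBQ).2⟩
  have hbdd : BddAbove cards := by
    obtain ⟨n, hn⟩ := hadm.exists_ncard_le hB.isBounded
    refine ⟨n, ?_⟩
    rintro _ ⟨P, hP, -, hmeets, rfl⟩
    exact hn P hP fun m hm => (hmeets m hm).mono (inter_subset_inter_right m interior_subset)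
  obtain ⟨n, ⟨P, hP, hBP, hmeets, rfl⟩, hmax⟩ := hbdd.exists_isGreatest_of_nonempty hcards
  refine ⟨P, hP, hBP, hmeets, fun Q hQ hPQ m hm hmB => ?_⟩
  obtain ⟨hmem, hcard⟩ := hmeeting Q hQ (hBP.trans (sUnion_mono hPQ))
  have hPQ' : P ⊆ tilesMeeting Q B := fun m hm => ⟨hPQ hm, hmeets m hm⟩
  rw [eq_of_subset_of_ncard_le hPQ' (hmax hcard) (hadm.pattern _ hmem).1]
  exact ⟨hm, hmB⟩

end Admissible

section Repetition

variable {d} {Ps : Set (Set (Set (Pt d)))} {P Q M : Set (Set (Pt d))} {a b s t : Fin d → ℝ} {r : ℝ}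

lemma le_rIn_of_boxSet_subset [Nonempty (Fin d)] (hM : Bornology.IsBounded (supp d M))
    (hr : ∀ j, 2 * r ≤ b j - a j) (hMab : boxSet d a b ⊆ supp d M) : r ≤ rIn d M := by
  refine le_rIn_of_closedBall_subset (x := WithLp.toLp 2 fun j => (a j + b j) / 2) hM
    ((closedBall_subset_boxSet fun j => ?_).trans hMab)
  constructor <;> linarith [hr j]

lemma supp_tilesMeeting_boxSet_subset (hdiam : ∀ m ∈ P, ∀ x ∈ m, ∀ y ∈ m, dist x y ≤ r)
    (has : ∀ j, a j + r ≤ s j) (htb : ∀ j, t j + r ≤ b j) :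
    supp d (tilesMeeting P (boxSet d s t)) ⊆ boxSet d a b := by
  rintro x ⟨m, ⟨hm, y, hym, hy⟩, hxm⟩ j
  have hdist := abs_le.mp ((abs_apply_sub_apply_le_dist x y j).trans (hdiam m hm x hxm y hym))
  have hyj := interior_subset hy j
  constructor <;> linarith [has j, htb j, hyj.1, hyj.2]

lemma Saturates.one_le_rOut [Nonempty (Fin d)] (hadm : Admissible d Ps)
    (hP : Saturates Ps P (cube d r)) (hr : 2 ≤ r) : 1 ≤ rOut d P := by
  have hr₀ : 0 ≤ r := by linarith
  have hdist := dist_le_two_mul_rOut (hadm.pattern P hP.mem).isCompact_supp.isBounded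
    (hP.subset_supp (const_mem_cube hr₀)) (hP.subset_supp (zero_mem_cube hr₀))
  have hcoord := abs_apply_sub_apply_le_dist (WithLp.toLp 2 fun _ => r) (0 : Pt d)
    (Classical.arbitrary _)
  simp only [PiLp.zero_apply, sub_zero, abs_of_nonneg hr₀] at hcoord
  linarith

lemma Saturates.rOut_le (hP : Saturates Ps P (cube d r)) (hr : 0 ≤ r)
    (hdiam : ∀ m ∈ P, ∀ x ∈ m, ∀ y ∈ m, dist x y ≤ r) : rOut d P ≤ (d + 1) * r := by
  refine rOut_le_of_subset_closedBall (x := 0) ⟨0, hP.subset_supp (zero_mem_cube hr)⟩ ?_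
  rintro x ⟨m, hm, hxm⟩
  obtain ⟨y, hym, hy⟩ := hP.meets m hm
  calc dist x 0 ≤ dist x y + dist y 0 := dist_triangle x y 0
    _ ≤ r + d * r := by
        gcongr
        · exact hdiam m hm x hxm y hym
        · rw [dist_zero_right]
          exact norm_le_of_mem_cube (interior_subset hy)
    _ = (d + 1) * r := by ring

lemma image_add_right_cube (t : Pt d) :
    (fun x => x + t) '' cube d r = boxSet d t fun j => t j + r := by
  simp only [cube, image_add_right_boxSet, zero_add, add_comm r]

-- Linear repetitivity applies to the tiles meeting a central box at distance `2 * r` from the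
-- boundary: these tiles, of diameter at most `r`, keep distance `r` from the boundary. The sides
-- of the central box exceed `2 * c * (d + 1) * r`, and `rOut P` is at most `(d + 1) * r`.
lemma Saturates.exists_image_add_subset [Nonempty (Fin d)] (hadm : Admissible d Ps) {c : ℝ}
    (hc : 0 < c)
    (hlr : ∀ P ∈ Ps, 1 ≤ rOut d P → ∀ Q ∈ Ps, c * rOut d P ≤ rIn d Q → SubpatternClass d P Q)
    (hdiam : ∀ P ∈ Ps, ∀ m ∈ P, ∀ x ∈ m, ∀ y ∈ m, dist x y ≤ r) (hr : 2 ≤ r)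
    (hP : Saturates Ps P (cube d r)) (hQ : Q ∈ Ps) (hQab : boxSet d a b ⊆ supp d Q)
    (hab : ∀ j, (5 + 2 * c * (d + 1)) * r ≤ b j - a j) :
    ∃ t : Pt d, patTrans d t P ⊆ Q ∧
      (fun x => x + t) '' cube d r ⊆ boxSet d (fun j => a j + r) fun j => b j - r := by
  let center := boxSet d (fun j => a j + 2 * r) fun j => b j - 2 * r
  have hcr : 0 ≤ 2 * c * (d + 1) * r := by positivity
  have hcenter : IsBox d center := ⟨_, _, fun j => by linarith [hab j], rfl⟩
  have hcenterQ : center ⊆ supp d Q := fun x hx => hQab fun j =>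
    ⟨by linarith [(hx j).1], by linarith [(hx j).2]⟩
  have hmem : tilesMeeting Q center ∈ Ps :=
    hadm.tilesMeeting_mem hQ hcenter.nonempty hcenter.subset_closure_interior hcenterQ
  have hrIn : c * ((d + 1) * r) ≤ rIn d (tilesMeeting Q center) :=
    le_rIn_of_boxSet_subset (hadm.pattern _ hmem).isCompact_supp.isBounded
      (fun j => by linarith [hab j])
      (subset_supp_tilesMeeting (hadm.pattern Q hQ) hcenter.subset_closure_interior hcenterQ)
  have hrOut : c * rOut d P ≤ c * ((d + 1) * r) := by
    gcongr
    exact hP.rOut_le (by linarith) (hdiam P hP.mem)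
  obtain ⟨t, ht⟩ := hlr P hP.mem (hP.one_le_rOut hadm hr) _ hmem (hrOut.trans hrIn)
  refine ⟨t, ht.trans tilesMeeting_subset, ?_⟩
  rintro _ ⟨x, hx, rfl⟩
  obtain ⟨m, hm, hxm⟩ := hP.subset_supp hx
  exact supp_tilesMeeting_boxSet_subset (hdiam Q hQ) (fun j => by linarith) (fun j => by linarith)
    ⟨_, ht (mem_image_of_mem _ hm), mem_image_of_mem _ hxm⟩

lemma LinearlyRepetitive.exists_copy [Nonempty (Fin d)] (hlr : LinearlyRepetitive d Ps)
    (hadm : Admissible d Ps) :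
    ∃ K : ℝ, 1 ≤ K ∧ ∀ᶠ r in atTop, ∀ P, Saturates Ps P (cube d r) →
      ∀ M ∈ BoxPatterns d Ps, ∀ a b, supp d M = boxSet d a b → (∀ j, K * r ≤ b j - a j) →
        ∃ t : Pt d, (∀ j, a j + r ≤ t j ∧ t j + r + r ≤ b j) ∧
          patRestrict d M (boxSet d t fun j => t j + r) =
            patTrans d t (patRestrict d P (cube d r)) := by
  obtain ⟨c, hc, hlr⟩ := hlr
  obtain ⟨D, hD⟩ := hadm.exists_dist_le_of_mem_tile
  have hcd : 0 ≤ 2 * c * (d + 1) := by positivity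
  refine ⟨5 + 2 * c * (d + 1), by linarith, ?_⟩
  filter_upwards [eventually_ge_atTop 2, eventually_ge_atTop D] with r hr hDr P hP M hM a b hMab hab
  obtain ⟨Q, hQ, hMQ, hQM⟩ := hadm.exists_patRestrict_supp_eq hM
  have hdiam : ∀ P ∈ Ps, ∀ m ∈ P, ∀ x ∈ m, ∀ y ∈ m, dist x y ≤ r :=
    fun P hP m hm x hx y hy => (hD P hP m hm x hx y hy).trans hDr
  obtain ⟨t, htQ, ht⟩ :=
    hP.exists_image_add_subset hadm hc hlr hdiam hr hQ (hMab ▸ hMQ) hab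
  have hr₀ : 0 ≤ r := by linarith
  refine ⟨t, fun j => ⟨?_, ?_⟩, ?_⟩
  · simpa using (ht (mem_image_of_mem _ (zero_mem_cube hr₀)) j).1
  · have := (ht (mem_image_of_mem _ (const_mem_cube hr₀)) j).2
    rw [PiLp.add_apply] at this
    linarith
  · rw [image_add_right_cube] at ht
    have hsub : boxSet d t (fun j => t j + r) ⊆ supp d M := by
      rw [hMab]
      exact fun x hx j => ⟨by linarith [(ht hx j).1], by linarith [(ht hx j).2]⟩
    rw [← hQM, patRestrict_patRestrict Q hsub, ← image_add_right_cube]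
    exact hP.patRestrict_image_add hadm hQ htQ

end Repetition

section Subadditivity

variable {d} {Ps : Set (Set (Set (Pt d)))} {P M : Set (Set (Pt d))} {F : Set (Set (Pt d)) → ℝ}
  {dF rF : ℝ} {cF : ℝ → ℝ} {r v δ : ℝ}

lemma SubadditiveOn.le_sum_cell (hF : SubadditiveOn d Ps F dF rF cF) (hM : M ∈ BoxPatterns d Ps)
    (g : BoxGrid d) (hgM : g.box = supp d M) (hg : ∀ k, r ≤ widthOf d (g.cell k)) (hr : rF ≤ r) :
    F M ≤ ∑ k, F (patRestrict d M (g.cell k)) + cF r * patVol d M := by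
  have hsub : F M ≤ ∑ k, F (patRestrict d M (g.cell k)) +
      ∑ k, cF (widthOf d (g.cell k)) * volOf d (g.cell k) := by
    let e := (Fintype.equivFin g.Index).symm
    rw [← e.sum_comp, ← e.sum_comp]
    refine hF.subadd M hM _ (fun i => g.cell (e i)) (fun i => g.isBox_cell _)
      (fun i j hij => g.interior_cell_inter_interior_cell (e.injective.ne hij)) ?_
      fun i => hr.trans (hg _)
    rw [e.surjective.iUnion_comp g.cell, g.iUnion_cell, hgM]
  refine hsub.trans ?_
  gcongr
  rw [patVol, ← hgM, ← g.sum_volOf_cell, Finset.mul_sum]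
  gcongr with k
  · exact (g.isBox_cell k).volOf_pos.le
  · exact hF.cF_anti r _ hr (hg k)

lemma SubadditiveOn.le_of_rPatterns [Nonempty (Fin d)] (hadm : Admissible d Ps)
    (hF : SubadditiveOn d Ps F dF rF cF) (hr₀ : 0 < r) (hr : rF ≤ r)
    (hv : ∀ N ∈ RPatterns d Ps r, F N ≤ v * patVol d N) (hM : M ∈ BoxPatterns d Ps)
    (hrM : r ≤ patWidth d M) : F M ≤ (v + cF r) * patVol d M := by
  obtain ⟨a, b, hab, hMab⟩ := hadm.isBox_supp hM
  rw [patWidth, hMab, le_widthOf_boxSet_iff fun j => (hab j).le] at hrM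
  obtain ⟨g, hgab, hg⟩ := exists_boxGrid_isRBox_cell hr₀ hrM
  have hgM : g.box = supp d M := hgab.trans hMab.symm
  have hcell (k) : F (patRestrict d M (g.cell k)) ≤ v * volOf d (g.cell k) := by
    have hsub : g.cell k ⊆ supp d M := hgM ▸ g.cell_subset_box k
    have hsupp := hadm.supp_patRestrict_of_mem_boxPatterns hM (g.isBox_cell k) hsub
    have hmem : patRestrict d M (g.cell k) ∈ RPatterns d Ps r := hadm.mem_rPatterns_iff.mpr
      ⟨hadm.patRestrict_mem_boxPatterns hM (g.isBox_cell k) hsub, hsupp.symm ▸ hg k⟩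
    simpa only [patVol, hsupp] using hv _ hmem
  calc F M ≤ ∑ k, F (patRestrict d M (g.cell k)) + cF r * patVol d M :=
        hF.le_sum_cell hM g hgM (fun k => (hg k).le_widthOf) hr
    _ ≤ ∑ k, v * volOf d (g.cell k) + cF r * patVol d M := by gcongr with k; exact hcell k
    _ = (v + cF r) * patVol d M := by
        rw [← Finset.mul_sum, g.sum_volOf_cell, hgM, patVol, add_mul]

lemma SubadditiveOn.le_of_cell_le (hadm : Admissible d Ps) (hF : SubadditiveOn d Ps F dF rF cF)
    (hr : rF ≤ r) (hv : ∀ N ∈ BoxPatterns d Ps, r ≤ patWidth d N → F N ≤ v * patVol d N)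
    (hM : M ∈ BoxPatterns d Ps) (g : BoxGrid d) (hgM : g.box = supp d M)
    (hg : ∀ k, r ≤ widthOf d (g.cell k)) (k₀ : g.Index)
    (hk₀ : F (patRestrict d M (g.cell k₀)) ≤ (v - δ) * volOf d (g.cell k₀)) :
    F M ≤ (v + cF r) * patVol d M - δ * volOf d (g.cell k₀) := by
  have hcell (k) : F (patRestrict d M (g.cell k)) ≤ v * volOf d (g.cell k) := by
    have hsub : g.cell k ⊆ supp d M := hgM ▸ g.cell_subset_box k
    have hsupp := hadm.supp_patRestrict_of_mem_boxPatterns hM (g.isBox_cell k) hsub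
    have := hv _ (hadm.patRestrict_mem_boxPatterns hM (g.isBox_cell k) hsub)
      (by simpa only [patWidth, hsupp] using hg k)
    simpa only [patVol, hsupp] using this
  have hsum : ∑ k, F (patRestrict d M (g.cell k)) ≤
      ∑ k, v * volOf d (g.cell k) - δ * volOf d (g.cell k₀) := by
    classical
    rw [← Finset.add_sum_erase _ _ (Finset.mem_univ k₀),
      ← Finset.add_sum_erase _ _ (Finset.mem_univ k₀)]
    linarith [Finset.sum_le_sum fun k (_ : k ∈ Finset.univ.erase k₀) => hcell k]
  rw [← Finset.mul_sum, g.sum_volOf_cell, hgM] at hsum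
  have := hF.le_sum_cell hM g hgM hg hr
  rw [patVol] at this ⊢
  linarith

end Subadditivity

section UpperMean

variable {d} {Ps : Set (Set (Set (Pt d)))} {P M : Set (Set (Pt d))} {F : Set (Set (Pt d)) → ℝ}
  {dF rF : ℝ} {cF : ℝ → ℝ} {r v δ L : ℝ}

lemma Admissible.nonempty_rPatterns (hne : Ps.Nonempty) (hadm : Admissible d Ps) (hr : 0 < r) :
    (RPatterns d Ps r).Nonempty := by
  obtain ⟨P, hP, hrP⟩ := hadm.exists_subset_supp hne (isBox_cube hr).isBounded
  exact ⟨_, P, hP, _, isRBox_cube hr, hrP, rfl⟩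

lemma Admissible.le_patWidth_of_mem_rPatterns [Nonempty (Fin d)] (hadm : Admissible d Ps)
    (hM : M ∈ RPatterns d Ps r) : r ≤ patWidth d M :=
  (hadm.mem_rPatterns_iff.mp hM).2.le_widthOf

variable (Ps) in
/-- The filter on box-patterns of `Ps` along which the limits `ω(P) → ∞` are taken. -/
def widthAtTop : Filter (Set (Set (Pt d))) := comap (patWidth d) atTop ⊓ 𝓟 (BoxPatterns d Ps)

lemma eventually_widthAtTop {p : Set (Set (Pt d)) → Prop} :
    (∀ᶠ M in widthAtTop Ps, p M) ↔ ∃ W, ∀ M ∈ BoxPatterns d Ps, W ≤ patWidth d M → p M := by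
  simp only [widthAtTop, eventually_inf_principal, eventually_comap, eventually_atTop]
  exact ⟨fun ⟨W, h⟩ => ⟨W, fun M hM hW => h _ hW M rfl hM⟩,
    fun ⟨W, h⟩ => ⟨W, fun _ hW M hMW hM => h M hM (hMW ▸ hW)⟩⟩

lemma eventually_mem_boxPatterns : ∀ᶠ M in widthAtTop Ps, M ∈ BoxPatterns d Ps :=
  eventually_widthAtTop.mpr ⟨0, fun _ hM _ => hM⟩

lemma Admissible.neBot_widthAtTop (hne : Ps.Nonempty) (hadm : Admissible d Ps) :
    (widthAtTop Ps).NeBot := by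
  have := hadm.nonempty_fin hne
  rw [neBot_iff, Ne, ← eventually_false_iff_eq_bot, eventually_widthAtTop]
  rintro ⟨W, hW⟩
  obtain ⟨M, hM⟩ := hadm.nonempty_rPatterns hne (lt_max_of_lt_right (zero_lt_one (α := ℝ)))
  exact hW M (hadm.mem_rPatterns_iff.mp hM).1
    ((le_max_left W 1).trans (hadm.le_patWidth_of_mem_rPatterns hM))

variable (Ps F) in
/-- The upper limit of `F(P) / |P|` as `ω(P) → ∞`. -/
def upperMean : ℝ := limsup (fun M => F M / patVol d M) (widthAtTop Ps)

namespace SubadditiveOn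

lemma abs_div_patVol_le (hadm : Admissible d Ps) (hF : SubadditiveOn d Ps F dF rF cF)
    (hM : M ∈ BoxPatterns d Ps) : |F M / patVol d M| ≤ dF := by
  have hpos := hadm.patVol_pos hM
  rw [abs_div, abs_of_pos hpos, div_le_iff₀ hpos]
  exact hF.bound M hM

lemma upperMean_le (hne : Ps.Nonempty) (hadm : Admissible d Ps)
    (hF : SubadditiveOn d Ps F dF rF cF)
    (h : ∀ M ∈ BoxPatterns d Ps, r ≤ patWidth d M → F M ≤ v * patVol d M) :
    upperMean Ps F ≤ v := by
  have := hadm.neBot_widthAtTop hne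
  have hbdd : (widthAtTop Ps).IsBoundedUnder (· ≥ ·) fun M => F M / patVol d M :=
    isBoundedUnder_of_eventually_ge (a := -dF)
      (eventually_mem_boxPatterns.mono fun _ hM => (abs_le.mp (hF.abs_div_patVol_le hadm hM)).1)
  refine limsup_le_of_le hbdd.isCoboundedUnder_le (eventually_widthAtTop.mpr ⟨r, fun M hM hr => ?_⟩)
  exact (div_le_iff₀ (hadm.patVol_pos hM)).mpr (h M hM hr)

lemma eventually_div_lt (hadm : Admissible d Ps) (hF : SubadditiveOn d Ps F dF rF cF)
    (hv : upperMean Ps F < v) : ∀ᶠ M in widthAtTop Ps, F M / patVol d M < v :=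
  eventually_lt_of_limsup_lt hv <| isBoundedUnder_of_eventually_le (a := dF)
    (eventually_mem_boxPatterns.mono fun _ hM => (abs_le.mp (hF.abs_div_patVol_le hadm hM)).2)

lemma eventually_forall_le_mul_patVol (hadm : Admissible d Ps)
    (hF : SubadditiveOn d Ps F dF rF cF) (hv : upperMean Ps F < v) :
    ∀ᶠ r in atTop, ∀ M ∈ BoxPatterns d Ps, r ≤ patWidth d M → F M ≤ v * patVol d M := by
  obtain ⟨W, hW⟩ := eventually_widthAtTop.mp (hF.eventually_div_lt hadm hv)
  filter_upwards [eventually_ge_atTop W] with r hr M hM hrM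
  exact ((div_lt_iff₀ (hadm.patVol_pos hM)).mp (hW M hM (hr.trans hrM))).le

-- A copy of the deficient cube is a cell of `M` carrying at least the fraction `((2 * K) ^ d)⁻¹`
-- of its volume.
lemma le_of_exists_copy [Nonempty (Fin d)] (hadm : Admissible d Ps)
    (hF : SubadditiveOn d Ps F dF rF cF) {K : ℝ} (hK : 1 ≤ K) (hr₀ : 0 < r) (hr : rF ≤ r)
    (hδ : 0 ≤ δ)
    (hcopy : ∀ M ∈ BoxPatterns d Ps, ∀ a b, supp d M = boxSet d a b → (∀ j, K * r ≤ b j - a j) →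
      ∃ t : Pt d, (∀ j, a j + r ≤ t j ∧ t j + r + r ≤ b j) ∧
        patRestrict d M (boxSet d t fun j => t j + r) =
          patTrans d t (patRestrict d P (cube d r)))
    (hv : ∀ N ∈ BoxPatterns d Ps, r ≤ patWidth d N → F N ≤ v * patVol d N)
    (hP : patRestrict d P (cube d r) ∈ BoxPatterns d Ps)
    (hPδ : F (patRestrict d P (cube d r)) ≤ (v - δ) * r ^ d) (hM : M ∈ RPatterns d Ps (K * r)) :
    F M ≤ (v + cF r - δ * ((2 * K) ^ d)⁻¹) * patVol d M := by
  obtain ⟨hM, hrbox⟩ := hadm.mem_rPatterns_iff.mp hM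
  have hvol : ((2 * K) ^ d)⁻¹ * patVol d M ≤ r ^ d := by
    rw [inv_mul_le_iff₀ (by positivity), ← mul_pow, mul_assoc]
    exact hrbox.volOf_le
  obtain ⟨a, b, -, hMab, hside⟩ := hrbox
  obtain ⟨t, ht, heq⟩ := hcopy M hM a b hMab fun j => (hside j).1
  obtain ⟨g, k₀, hgab, hk₀, hg⟩ :=
    exists_boxGrid_cell_eq hr₀ (fun j => (ht j).1) (fun j => le_rfl) fun j => (ht j).2
  have hvol_cell : volOf d (g.cell k₀) = r ^ d := by
    rw [hk₀, volOf_boxSet fun j => by linarith]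
    simp
  have hF_cell : F (patRestrict d M (g.cell k₀)) ≤ (v - δ) * volOf d (g.cell k₀) := by
    rw [hvol_cell, hk₀, heq, hF.invariant t _ hP]
    exact hPδ
  calc F M ≤ (v + cF r) * patVol d M - δ * r ^ d := by
        rw [← hvol_cell]
        exact hF.le_of_cell_le hadm hr hv hM g (hgab.trans hMab.symm) hg k₀ hF_cell
    _ ≤ (v + cF r) * patVol d M - δ * (((2 * K) ^ d)⁻¹ * patVol d M) := by gcongr
    _ = (v + cF r - δ * ((2 * K) ^ d)⁻¹) * patVol d M := by ring

lemma eventually_lt_of_saturates (hne : Ps.Nonempty) (hadm : Admissible d Ps)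
    (hlr : LinearlyRepetitive d Ps) (hF : SubadditiveOn d Ps F dF rF cF) (hδ : 0 < δ) :
    ∀ᶠ r in atTop, ∀ P, Saturates Ps P (cube d r) →
      (upperMean Ps F - δ) * r ^ d < F (patRestrict d P (cube d r)) := by
  have := hadm.nonempty_fin hne
  obtain ⟨K, hK, hcopy⟩ := hlr.exists_copy hadm
  let η := δ * ((2 * K) ^ d)⁻¹ / 3
  have hη : 0 < η := by positivity
  filter_upwards [hcopy, hF.eventually_forall_le_mul_patVol hadm (lt_add_of_pos_right _ hη),
    hF.cF_lim.eventually_lt_const hη, eventually_gt_atTop 0, eventually_ge_atTop rF]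
    with r hcopy hv hcF hr₀ hr P hP
  by_contra! hdeficient
  have hPr : patRestrict d P (cube d r) ∈ BoxPatterns d Ps :=
    ⟨P, hP.mem, _, isBox_cube hr₀, hP.subset_supp, rfl⟩
  have hPδ : F (patRestrict d P (cube d r)) ≤ (upperMean Ps F + η - δ) * r ^ d :=
    hdeficient.trans (by gcongr; linarith)
  have hKr : r ≤ K * r := le_mul_of_one_le_left hr₀.le hK
  have hmean := hF.upperMean_le hne hadm fun M hM hM' =>
    hF.le_of_rPatterns hadm (hr₀.trans_le hKr) (hr.trans hKr)
      (fun N hN => hF.le_of_exists_copy hadm hK hr₀ hr hδ.le (hcopy P hP) hv hPr hPδ hN) hM hM'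
  have hη_eq : δ * ((2 * K) ^ d)⁻¹ = 3 * η := by ring
  linarith [hF.cF_anti r (K * r) hr hKr]

lemma upperMean_add_upperMean_neg_nonpos (hne : Ps.Nonempty) (hadm : Admissible d Ps)
    (hlr : LinearlyRepetitive d Ps) (hF : SubadditiveOn d Ps F dF rF cF) {dG rG : ℝ} {cG : ℝ → ℝ}
    (hG : SubadditiveOn d Ps (fun P => -F P) dG rG cG) :
    upperMean Ps F + upperMean Ps (fun P => -F P) ≤ 0 := by
  by_contra! hpos
  obtain ⟨r, hrF, hrG, hr⟩ := ((hF.eventually_lt_of_saturates hne hadm hlr (half_pos hpos)).and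
    ((hG.eventually_lt_of_saturates hne hadm hlr (half_pos hpos)).and
      (eventually_gt_atTop 0))).exists
  obtain ⟨P, hP⟩ := hadm.exists_saturates hne (isBox_cube hr)
  linarith [hrF P hP, hrG P hP]

lemma tendsto_div_patVol (hne : Ps.Nonempty) (hadm : Admissible d Ps)
    (hlr : LinearlyRepetitive d Ps) (hF : SubadditiveOn d Ps F dF rF cF) {dG rG : ℝ} {cG : ℝ → ℝ}
    (hG : SubadditiveOn d Ps (fun P => -F P) dG rG cG) :
    Tendsto (fun M => F M / patVol d M) (widthAtTop Ps) (𝓝 (upperMean Ps F)) := by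
  have hsum := hF.upperMean_add_upperMean_neg_nonpos hne hadm hlr hG
  refine tendsto_order.mpr ⟨fun v hv => ?_, fun v hv => hF.eventually_div_lt hadm hv⟩
  have hv' : upperMean Ps (fun P => -F P) < -v := by linarith
  filter_upwards [hG.eventually_div_lt hadm hv'] with M hM
  rwa [neg_div, neg_lt_neg_iff] at hM

end SubadditiveOn

lemma tendsto_Fplus (hne : Ps.Nonempty) (hadm : Admissible d Ps)
    (h : Tendsto (fun M => F M / patVol d M) (widthAtTop Ps) (𝓝 L)) :
    Tendsto (Fplus d Ps F) atTop (𝓝 L) := by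
  have := hadm.nonempty_fin hne
  rw [nhds_basis_closedBall.tendsto_right_iff] at h ⊢
  intro ε hε
  obtain ⟨W, hW⟩ := eventually_widthAtTop.mp (h ε hε)
  filter_upwards [eventually_ge_atTop W, eventually_gt_atTop 0] with r hWr hr
  have hmeans : (fun P => F P / patVol d P) '' RPatterns d Ps r ⊆ closedBall L ε := by
    rintro _ ⟨M, hM, rfl⟩
    exact hW M (hadm.mem_rPatterns_iff.mp hM).1
      (hWr.trans (hadm.le_patWidth_of_mem_rPatterns hM))
  exact closure_minimal hmeans isClosed_closedBall (csSup_mem_closure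
    ((hadm.nonempty_rPatterns hne hr).image _) (isBounded_closedBall.subset hmeans).bddAbove)

end UpperMean

/-- Corollary 3.2, additive ergodic theorem.
If both `F` and `-F` are subadditive on the box-patterns of a nonempty admissible
linearly repetitive set of abstract patterns, then `F(P)/|P|` converges (as the
width `ω(P) → ∞` along `𝒫_B`) to a limit `L`, which equals `lim_{r→∞} F⁺(r)`. -/
theorem additive_ergodic (d : ℕ) (Ps : Set (Set (Set (Pt d))))
    (hne : Ps.Nonempty) (hadm : Admissible d Ps) (hlr : LinearlyRepetitive d Ps)
    (F : Set (Set (Pt d)) → ℝ)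
    (hFsub : ∃ (dF rF : ℝ) (cF : ℝ → ℝ), SubadditiveOn d Ps F dF rF cF)
    (hFsup : ∃ (dG rG : ℝ) (cG : ℝ → ℝ), SubadditiveOn d Ps (fun P => -(F P)) dG rG cG) :
    ∃ L : ℝ,
      Tendsto (Fplus d Ps F) atTop (nhds L) ∧
      ∀ ε : ℝ, 0 < ε → ∃ W : ℝ, 0 < W ∧
        ∀ P ∈ BoxPatterns d Ps, W ≤ patWidth d P →
          |F P / patVol d P - L| < ε := by
  obtain ⟨dF, rF, cF, hF⟩ := hFsub
  obtain ⟨dG, rG, cG, hG⟩ := hFsup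
  have hlim := hF.tendsto_div_patVol hne hadm hlr hG
  refine ⟨upperMean Ps F, tendsto_Fplus hne hadm hlim, fun ε hε => ?_⟩
  obtain ⟨W, hW⟩ := eventually_widthAtTop.mp (Metric.tendsto_nhds.mp hlim ε hε)
  refine ⟨max W 1, by positivity, fun P hP hWP => ?_⟩
  simpa only [Real.dist_eq] using hW P hP ((le_max_left W 1).trans hWP)

end
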